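/- arXiv:1407.4720 — 2 statements merged into one kernel-verified Lean document; each statement's English description precedes it below -/
import Mathlib

section
/- Fix an integer d > 1. For all sufficiently large n the following holds: for any set X of n positive integers, every antichain U in the partial order on d-element subsets of X (where B ≤ C if and only if the i-th smallest element of B is at most the i-th smallest element of C for every 1 ≤ i ≤ d) satisfies |U| < (2/√d)·(1/n)·C(n,d). -/
/-- The `i`-th smallest element of a finset of naturals (0-indexed; junk value `0` if
`i` is out of range). -/
def kthSmallest (B : Finset ℕ) (i : ℕ) : ℕ :=
  (B.sort (· ≤ ·)).getD i 0

/-- The partial order on `d`-element subsets: `B ≤ C` iff for each `i < d`, the `i`-th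
smallest element of `B` is at most the `i`-th smallest element of `C`. -/
def SubsetLE (d : ℕ) (B C : Finset ℕ) : Prop :=
  ∀ i < d, kthSmallest B i ≤ kthSmallest C i

/-
Let `X` have `n + 1` elements. The ranks in `X` of the elements of a `d`-subset, taken in all `d!`
orders, are points of the grid `{0, …, n} ^ d`, and the points that come from an antichain of `c`
subsets form an antichain of size `c * d!` in that grid. Two coordinates of a grid can be cut into
hook-shaped chains, of the same lengths as in the Clebsch-Gordan formula
`U m * U n = ∑ k ≤ min m n, U (m + n - 2 * k)` for Chebyshev polynomials. By induction on `d`, an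
antichain in `{0, …, n} ^ d` therefore has at most `L (U n ^ d)` elements for every additive `L`
that is at least `1` on each `U k`. Integration against `π⁻¹ * (1 + cos θ)` is such an `L`. It
remains to bound the integral of `|U n (cos θ)| ^ d`: near `0` a Gaussian dominates it and gives
the main term `(n + 1) ^ (d - 1) * √(8 / (π * d))`, whereas the range `θ ≥ π / (n + 1)`, on which
`|U n (cos θ)| ≤ 1 / sin θ`, contributes a relative error that decreases exponentially in `d`. As
`√(8 / π) < 2`, there is room for that error.
-/

section GridAntichain

open Finset Polynomial Polynomial.Chebyshev

theorem chebyshev_U_mul_U_natCast (R : Type*) [CommRing R] (m : ℤ) (n : ℕ) :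
    U R m * U R n = ∑ k ∈ range (n + 1), U R (m + n - 2 * k) := by
  have two_mul_X_mul_U (j : ℤ) : 2 * X * U R j = U R (j + 1) + U R (j - 1) := by
    rw [U_add_one]; ring
  induction n using Nat.twoStepInduction with
  | zero => simp
  | one =>
    rw [sum_range_succ, sum_range_one, Nat.cast_one, U_one, mul_comm, two_mul_X_mul_U]
    push_cast
    ring_nf
  | more n ih₀ ih₁ =>
    calc U R m * U R (n + 2 : ℕ)
        = 2 * X * (U R m * U R (n + 1 : ℕ)) - U R m * U R n := by
          push_cast; rw [U_add_two]; ring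
      _ = ∑ k ∈ range (n + 2), U R (m + (n + 2 : ℕ) - 2 * k) +
            (∑ k ∈ range (n + 2), U R (m + n - 2 * k) -
              ∑ k ∈ range (n + 1), U R (m + n - 2 * k)) := by
          rw [ih₀, ih₁, mul_sum, ← add_sub_assoc, ← sum_add_distrib]
          congr 1
          refine sum_congr rfl fun k _ => ?_
          rw [two_mul_X_mul_U]
          push_cast
          ring_nf
      _ = ∑ k ∈ range (n + 3), U R (m + (n + 2 : ℕ) - 2 * k) := by
          rw [sum_range_succ (fun k : ℕ => U R (m + n - 2 * k)), add_sub_cancel_left,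
            sum_range_succ _ (n + 2)]
          push_cast
          ring_nf

theorem chebyshev_U_mul_U (R : Type*) [CommRing R] (m n : ℕ) :
    U R m * U R n = ∑ k ∈ range (min m n + 1), U R (m + n - 2 * k : ℕ) := by
  wlog h : n ≤ m generalizing m n
  · rw [mul_comm, this n m (Nat.le_of_not_le h), min_comm, add_comm m]
  rw [chebyshev_U_mul_U_natCast, min_eq_right h]
  refine sum_congr rfl fun k hk => ?_
  have : 2 * k ≤ m + n := by have := mem_range.1 hk; lia
  push_cast [this]
  rfl

theorem le_and_le_of_add_le_add_of_min_eq {a b a' b' n : ℕ} (hb : b ≤ n) (hb' : b' ≤ n)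
    (hmin : min a (n - b) = min a' (n - b')) (h : a + b ≤ a' + b') :
    a ≤ a' ∧ b ≤ b' := by
  lia

theorem card_le_map_U_mul_U_pow {ι R M : Type*} [CommRing R]
    [AddCommMonoidWithOne M] [PartialOrder M] [IsOrderedAddMonoid M] [ZeroLEOneClass M]
    (L : R[X] →+ M) (hL : ∀ k : ℕ, 1 ≤ L (U R k)) {d m n : ℕ} {s : Finset ι}
    {g : ι → ℕ} {f : ι → Fin d → ℕ}
    (hg : ∀ a ∈ s, g a ≤ m) (hf : ∀ a ∈ s, ∀ i, f a i ≤ n)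
    (hs : ∀ a ∈ s, ∀ b ∈ s, g a ≤ g b → f a ≤ f b → a = b) :
    (#s : M) ≤ L (U R m * U R n ^ d) := by
  induction d generalizing m s g with
  | zero =>
    have hcard : #s ≤ 1 := card_le_one.2 fun a ha b hb =>
      (le_total (g a) (g b)).elim (fun h => hs a ha b hb h (Subsingleton.elim _ _).le)
        fun h => (hs b hb a ha h (Subsingleton.elim _ _).le).symm
    rw [pow_zero, mul_one]
    exact (Nat.mono_cast hcard).trans (Nat.cast_one.trans_le (hL m))
  | succ d ih =>
    -- The level sets of `level` are hook-shaped chains, which match the summands of `U m * U n`.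
    let level (a : ι) : ℕ := min (g a) (n - f a 0)
    have level_mem : (s : Set ι).MapsTo level (range (min m n + 1)) := fun a ha => by
      have := hg a ha
      simp only [level, coe_range, Set.mem_Iio]
      lia
    have card_level_le (k : ℕ) :
        (#{a ∈ s | level a = k} : M) ≤ L (U R (m + n - 2 * k : ℕ) * U R n ^ d) := by
      refine ih (g := fun a => g a + f a 0 - k) (f := fun a => Fin.tail (f a)) ?_ ?_ ?_
      · intro a ha
        obtain ⟨ha, hak⟩ := mem_filter.1 ha
        have := hg a ha
        have := hf a ha 0
        simp only [level] at hak
        lia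
      · exact fun a ha i => hf a (mem_filter.1 ha).1 i.succ
      · intro a ha b hb hgab htail
        obtain ⟨ha, hak⟩ := mem_filter.1 ha
        obtain ⟨hb, hbk⟩ := mem_filter.1 hb
        simp only [level] at hak hbk
        obtain ⟨hg', h0⟩ := le_and_le_of_add_le_add_of_min_eq (hf a ha 0) (hf b hb 0)
          (hak.trans hbk.symm) (by lia)
        exact hs a ha b hb hg' (Fin.forall_fin_succ.2 ⟨h0, htail⟩)
    calc (#s : M) = ∑ k ∈ range (min m n + 1), (#{a ∈ s | level a = k} : M) := by
          rw [card_eq_sum_card_fiberwise level_mem, Nat.cast_sum]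
      _ ≤ ∑ k ∈ range (min m n + 1), L (U R (m + n - 2 * k : ℕ) * U R n ^ d) :=
          sum_le_sum fun k _ => card_level_le k
      _ = L (U R m * U R n ^ (d + 1)) := by
          rw [← map_sum, ← sum_mul, ← chebyshev_U_mul_U, pow_succ', mul_assoc]

end GridAntichain

section SubsetAntichain

open Finset Polynomial

theorem kthSmallest_eq_orderEmbOfFin {B : Finset ℕ} {d : ℕ} (hB : #B = d) (i : Fin d) :
    kthSmallest B i = B.orderEmbOfFin hB i := by
  rw [orderEmbOfFin_apply, kthSmallest, List.getD_eq_getElem, Fin.getElem_fin]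

theorem kthSmallest_mem {B : Finset ℕ} {d : ℕ} (hB : #B = d) (i : Fin d) :
    kthSmallest B i ∈ B :=
  kthSmallest_eq_orderEmbOfFin hB i ▸ orderEmbOfFin_mem B hB i

theorem strictMono_kthSmallest {B : Finset ℕ} {d : ℕ} (hB : #B = d) :
    StrictMono fun i : Fin d => kthSmallest B i := by
  simpa only [kthSmallest_eq_orderEmbOfFin hB] using (B.orderEmbOfFin hB).strictMono

theorem le_of_comp_perm_le {ι α : Type*} [LinearOrder ι] [LocallyFiniteOrderBot ι] [Preorder α]
    {f g : ι → α} (hf : Monotone f) (hg : Monotone g) {σ : Equiv.Perm ι} (h : f ∘ σ ≤ g) :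
    f ≤ g := by
  intro j
  obtain ⟨i, hij, hji⟩ : ∃ i ≤ j, j ≤ σ i := by
    by_contra! hlt
    have : #(Iic j) ≤ #(Iio j) := card_le_card_of_injOn σ
      (fun i hi => by simpa using hlt i (by simpa using hi)) σ.injective.injOn
    exact this.not_gt (card_lt_card <| Iic_eq_cons_Iio j ▸ ssubset_cons _)
  exact (hf hji).trans ((h i).trans (hg hij))

theorem perm_eq_of_comp_le_comp {ι α : Type*} [Finite ι] [AddCommMonoid α] [PartialOrder α]
    [IsOrderedCancelAddMonoid α] {f : ι → α} (hf : Function.Injective f) {σ τ : Equiv.Perm ι}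
    (h : f ∘ σ ≤ f ∘ τ) : σ = τ := by
  cases nonempty_fintype ι
  have hsum : ∑ i, f (σ i) = ∑ i, f (τ i) := by rw [Equiv.sum_comp, Equiv.sum_comp]
  ext1 i
  exact hf ((sum_eq_sum_iff_of_le fun i _ => h i).1 hsum i (mem_univ i))

theorem eq_of_kthSmallest_comp_le {d : ℕ} {U : Finset (Finset ℕ)} (hcard : ∀ B ∈ U, #B = d)
    (hU : IsAntichain (SubsetLE d) (U : Set (Finset ℕ))) {B C : Finset ℕ} (hB : B ∈ U)
    (hC : C ∈ U) {σ τ : Equiv.Perm (Fin d)}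
    (h : ∀ i, kthSmallest B (σ i) ≤ kthSmallest C (τ i)) : B = C ∧ σ = τ := by
  obtain rfl : B = C := by
    refine hU.eq hB hC fun i hi => ?_
    exact le_of_comp_perm_le (strictMono_kthSmallest (hcard B hB)).monotone
      (strictMono_kthSmallest (hcard C hC)).monotone (σ := τ.symm.trans σ)
      (fun j => by simpa using h (τ.symm j)) ⟨i, hi⟩
  exact ⟨rfl, perm_eq_of_comp_le_comp (strictMono_kthSmallest (hcard B hB)).injective h⟩

theorem card_antichain_mul_factorial_le_map_U_pow {R M : Type*} [CommRing R]
    [AddCommMonoidWithOne M] [PartialOrder M] [IsOrderedAddMonoid M] [ZeroLEOneClass M]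
    (L : R[X] →+ M) (hL : ∀ k : ℕ, 1 ≤ L (Chebyshev.U R k)) {d n : ℕ}
    {X : Finset ℕ} (hX : #X = n + 1)
    {U : Finset (Finset ℕ)} (hUX : U ⊆ X.powersetCard d)
    (hU : IsAntichain (SubsetLE d) (U : Set (Finset ℕ))) :
    ((#U * d.factorial : ℕ) : M) ≤ L (Chebyshev.U R n ^ d) := by
  have hcard : ∀ B ∈ U, #B = d := fun B hB => (mem_powersetCard.1 (hUX hB)).2
  have kthSmallest_mem_X {B : Finset ℕ} (hB : B ∈ U) (i : Fin d) : kthSmallest B i ∈ X :=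
    (mem_powersetCard.1 (hUX hB)).1 (kthSmallest_mem (hcard B hB) i)
  let rank : ℕ → ℕ := Nat.count (· ∈ X)
  have rank_le {x : ℕ} (hx : x ∈ X) : rank x ≤ n := by
    have := Nat.count_lt_card (p := (· ∈ X)) X.finite_toSet hx
    rw [X.finite_toSet_toFinset, hX] at this
    exact Nat.le_of_lt_succ this
  have le_of_rank_le {x y : ℕ} (hy : y ∈ X) (h : rank x ≤ rank y) : x ≤ y :=
    not_lt.1 fun hlt => h.not_gt (Nat.count_strict_mono hy hlt)
  have hprod := card_le_map_U_mul_U_pow L hL (m := 0) (n := n)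
    (s := U ×ˢ (univ : Finset (Equiv.Perm (Fin d)))) (g := 0)
    (f := fun a i => rank (kthSmallest a.1 (a.2 i))) (fun _ _ => le_rfl)
    (fun a ha i => rank_le (kthSmallest_mem_X (mem_product.1 ha).1 _))
    (fun a ha b hb _ h => Prod.ext_iff.2 <| eq_of_kthSmallest_comp_le hcard hU
      (mem_product.1 ha).1 (mem_product.1 hb).1 fun i =>
        le_of_rank_le (kthSmallest_mem_X (mem_product.1 hb).1 _) (h i))
  simpa [Fintype.card_perm] using hprod

end SubsetAntichain

section IrreducibleCount

open Polynomial Polynomial.Chebyshev Real MeasureTheory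

theorem integrable_eval_measureT (p : ℝ[X]) : Integrable (fun x => p.eval x) measureT :=
  integrable_measureT p.continuousOn

/-- The functional `p ↦ π⁻¹ ∫ θ in 0..π, (1 + cos θ) * p (cos θ)`, which sends every `U n` to `1`.
It counts the irreducible components of a representation of `SU(2)` whose character is written as
a polynomial in `cos θ`. The weight `1 + cos θ` treats the components of both parities at once. -/
noncomputable def irreducibleCount : ℝ[X] →+ ℝ where
  toFun p := π⁻¹ * ∫ x, ((1 + X) * p).eval x ∂measureT
  map_zero' := by simp
  map_add' p q := by
    simp only [mul_add, eval_add]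
    rw [integral_add (integrable_eval_measureT _) (integrable_eval_measureT _), mul_add]

theorem irreducibleCount_apply (p : ℝ[X]) :
    irreducibleCount p = π⁻¹ * ∫ θ in 0..π, (1 + cos θ) * p.eval (cos θ) := by
  rw [irreducibleCount, AddMonoidHom.coe_mk, ZeroHom.coe_mk, integral_measureT_eq_integral_cos]
  simp only [eval_mul, eval_add, eval_one, eval_X]

theorem integral_T_add_T_add_one_measureT {n : ℕ} (hn : n ≠ 0) :
    ∫ x, (T ℝ n + T ℝ (n + 1)).eval x ∂measureT = 0 := by
  simp only [eval_add]
  rw [integral_add (integrable_eval_measureT _) (integrable_eval_measureT _),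
    integral_eval_T_real_measureT_of_ne_zero (by lia),
    integral_eval_T_real_measureT_of_ne_zero (by lia), add_zero]

theorem irreducibleCount_U (n : ℕ) : irreducibleCount (U ℝ n) = 1 := by
  induction n with
  | zero =>
    have : (1 + X : ℝ[X]) * U ℝ (0 : ℕ) = T ℝ 0 + T ℝ 1 := by simp
    simp only [irreducibleCount, AddMonoidHom.coe_mk, ZeroHom.coe_mk, this, eval_add]
    rw [integral_add (integrable_eval_measureT _) (integrable_eval_measureT _),
      integral_eval_T_real_measureT_zero, integral_eval_T_real_measureT_of_ne_zero one_ne_zero,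
      add_zero, inv_mul_cancel₀ pi_ne_zero]
  | succ n ih =>
    have hdiff : (1 + X) * (U ℝ (n + 1 : ℕ) - U ℝ n) =
        T ℝ (n + 1 : ℕ) + T ℝ ((n + 1 : ℕ) + 1) := by
      have h₁ := T_eq_U_sub_X_mul_U ℝ (n + 1)
      have h₂ := T_eq_X_mul_U_sub_U ℝ n
      push_cast
      rw [add_sub_cancel_right] at h₁
      rw [add_assoc (n : ℤ) 1 1, one_add_one_eq_two, h₁, h₂]
      ring
    have hstep : irreducibleCount (U ℝ (n + 1 : ℕ) - U ℝ n) = 0 := by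
      rw [irreducibleCount, AddMonoidHom.coe_mk, ZeroHom.coe_mk, hdiff,
        integral_T_add_T_add_one_measureT n.succ_ne_zero, mul_zero]
    rwa [map_sub, ih, sub_eq_zero] at hstep

theorem integral_zero_pi_eq_integral_add_reflect {f : ℝ → ℝ} (hf : Continuous f) :
    ∫ θ in 0..π, f θ = ∫ θ in 0..(π / 2), (f θ + f (π - θ)) := by
  have hreflect : ∫ θ in 0..(π / 2), f (π - θ) = ∫ θ in (π / 2)..π, f θ := by
    rw [intervalIntegral.integral_comp_sub_left, sub_half, sub_zero]
  rw [intervalIntegral.integral_add (hf.intervalIntegrable _ _)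
    ((by fun_prop : Continuous fun θ => f (π - θ)).intervalIntegrable _ _), hreflect,
    intervalIntegral.integral_add_adjacent_intervals (hf.intervalIntegrable _ _)
      (hf.intervalIntegrable _ _)]

theorem irreducibleCount_le_integral_abs {p : ℝ[X]} (hp : ∀ x, |p.eval (-x)| = |p.eval x|) :
    irreducibleCount p ≤ 2 / π * ∫ θ in 0..(π / 2), |p.eval (cos θ)| := by
  have hcont : Continuous fun θ => p.eval (cos θ) := p.continuous.comp continuous_cos
  rw [irreducibleCount_apply, integral_zero_pi_eq_integral_add_reflect (by fun_prop),
    div_eq_inv_mul 2 π, mul_assoc]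
  refine mul_le_mul_of_nonneg_left ?_ (inv_nonneg.2 pi_pos.le)
  rw [← intervalIntegral.integral_const_mul]
  refine intervalIntegral.integral_mono_on (by positivity)
    (Continuous.intervalIntegrable ?_ _ _) (Continuous.intervalIntegrable (by fun_prop) _ _) ?_
  · have := hcont.comp (continuous_sub_left π)
    simp only [Function.comp_def] at this
    fun_prop
  · intro θ _
    have h₁ : 0 ≤ 1 + cos θ := by linarith [neg_one_le_cos θ]
    have h₂ : 0 ≤ 1 - cos θ := by linarith [cos_le_one θ]
    calc (1 + cos θ) * p.eval (cos θ) + (1 + cos (π - θ)) * p.eval (cos (π - θ))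
        = (1 + cos θ) * p.eval (cos θ) + (1 - cos θ) * p.eval (-cos θ) := by
          rw [cos_pi_sub, ← sub_eq_add_neg]
      _ ≤ (1 + cos θ) * |p.eval (cos θ)| + (1 - cos θ) * |p.eval (-cos θ)| := by
          gcongr <;> exact le_abs_self _
      _ = 2 * |p.eval (cos θ)| := by rw [hp]; ring

theorem abs_eval_neg_U_pow (n d : ℕ) (x : ℝ) :
    |(U ℝ n ^ d).eval (-x)| = |(U ℝ n ^ d).eval x| := by
  rw [eval_pow, eval_pow, abs_pow, abs_pow, U_eval_neg, abs_mul]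
  simp

end IrreducibleCount

section TrigBounds

open Real

theorem cos_le_exp_neg_sq_div_two {x : ℝ} (hx₀ : 0 ≤ x) (hx : x ≤ π / 2) :
    cos x ≤ exp (-(x ^ 2 / 2)) := by
  have hderiv (y : ℝ) : HasDerivAt (fun y => cos y * exp (y ^ 2 / 2))
      ((cos y * y - sin y) * exp (y ^ 2 / 2)) y := by
    convert! (hasDerivAt_cos y).mul ((hasDerivAt_pow 2 y).div_const 2).exp using 1
    ring
  have hanti : AntitoneOn (fun y => cos y * exp (y ^ 2 / 2)) (Set.Icc 0 (π / 2)) := by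
    refine antitoneOn_of_deriv_nonpos (convex_Icc _ _) (by fun_prop) (by fun_prop) fun y hy => ?_
    rw [interior_Icc] at hy
    have hcos : 0 < cos y := cos_pos_of_mem_Ioo ⟨by linarith [hy.1, pi_pos], hy.2⟩
    have htan : y < sin y / cos y := tan_eq_sin_div_cos y ▸ lt_tan hy.1 hy.2
    rw [(hderiv y).deriv]
    refine mul_nonpos_of_nonpos_of_nonneg ?_ (exp_pos _).le
    linarith [(lt_div_iff₀ hcos).1 htan]
  have h := hanti (Set.left_mem_Icc.2 (by positivity)) ⟨hx₀, hx⟩ hx₀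
  rw [exp_neg, ← one_div, le_div_iff₀ (exp_pos _)]
  simpa using h

theorem sin_le_mul_exp_neg_sq_div_eight {x : ℝ} (hx₀ : 0 ≤ x) (hx : x ≤ π) :
    sin x ≤ x * exp (-(x ^ 2 / 8)) := by
  calc sin x = 2 * sin (x / 2) * cos (x / 2) := by rw [← sin_two_mul, mul_div_cancel₀ _ two_ne_zero]
    _ ≤ 2 * (x / 2) * exp (-((x / 2) ^ 2 / 2)) := by
      gcongr
      · exact cos_nonneg_of_mem_Icc ⟨by linarith [pi_pos], by linarith⟩
      · exact sin_le (by positivity)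
      · exact cos_le_exp_neg_sq_div_two (by positivity) (by linarith)
    _ = x * exp (-(x ^ 2 / 8)) := by ring_nf

theorem sinc_mul_le_sin {a x : ℝ} (ha : a ≤ π) (hx₀ : 0 ≤ x) (hx : x ≤ a) :
    sinc a * x ≤ sin x := by
  obtain rfl | ha₀ := (hx₀.trans hx).eq_or_lt
  · simp [le_antisymm hx hx₀]
  have h := strictConcaveOn_sin_Icc.concaveOn.2 (x := 0) (y := a) ⟨le_rfl, pi_pos.le⟩ ⟨ha₀.le, ha⟩
    (sub_nonneg.2 ((div_le_one ha₀).2 hx)) (div_nonneg hx₀ ha₀.le) (sub_add_cancel _ _)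
  simp only [sin_zero, smul_eq_mul, mul_zero, zero_add, div_mul_cancel₀ x ha₀.ne'] at h
  rw [sinc_of_ne_zero ha₀.ne']
  exact (div_mul_comm _ _ _).trans_le h

theorem sinc_pos {x : ℝ} (hx₀ : 0 < x) (hx : x < π) : 0 < sinc x := by
  rw [sinc_of_ne_zero hx₀.ne']
  exact div_pos (sin_pos_of_pos_of_lt_pi hx₀ hx) hx₀

end TrigBounds

section IntegralBounds

open Polynomial Polynomial.Chebyshev Real MeasureTheory

theorem integral_exp_neg_mul_sq_le {a b : ℝ} (ha : 0 ≤ a) (hb : 0 < b) :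
    ∫ x in 0..a, exp (-b * x ^ 2) ≤ √(π / b) / 2 := by
  rw [← integral_gaussian_Ioi, intervalIntegral.integral_of_le ha]
  exact setIntegral_mono_set (integrable_exp_neg_mul_sq hb).integrableOn
    (.of_forall fun x => (exp_pos _).le) (.of_forall fun x hx => hx.1)

theorem intervalIntegrable_inv_sin_pow {a : ℝ} (ha₀ : 0 < a) (ha : a ≤ π / 2) (d : ℕ) :
    IntervalIntegrable (fun x => (sin x)⁻¹ ^ d) volume a (π / 2) := by
  refine ContinuousOn.intervalIntegrable ((continuousOn_sin.inv₀ fun x hx => ?_).pow d)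
  rw [Set.uIcc_of_le ha] at hx
  exact (sin_pos_of_pos_of_lt_pi (ha₀.trans_le hx.1) (by linarith [hx.2, pi_pos])).ne'

theorem integral_inv_sin_sq {a : ℝ} (ha₀ : 0 < a) (ha : a ≤ π / 2) :
    ∫ x in a..(π / 2), (sin x)⁻¹ ^ 2 = cos a / sin a := by
  have hderiv : ∀ x ∈ Set.uIcc a (π / 2),
      HasDerivAt (fun x => -(cos x / sin x)) ((sin x)⁻¹ ^ 2) x := by
    intro x hx
    rw [Set.uIcc_of_le ha] at hx
    have hsin : sin x ≠ 0 :=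
      (sin_pos_of_pos_of_lt_pi (ha₀.trans_le hx.1) (by linarith [hx.2, pi_pos])).ne'
    convert! ((hasDerivAt_cos x).div (hasDerivAt_sin x) hsin).neg using 1
    field_simp
    linarith [sin_sq_add_cos_sq x]
  rw [intervalIntegral.integral_eq_sub_of_hasDerivAt hderiv
    (intervalIntegrable_inv_sin_pow ha₀ ha 2)]
  simp

theorem integral_inv_sin_pow_le {a : ℝ} (ha₀ : 0 < a) (ha : a ≤ π / 2) {d : ℕ} (hd : 2 ≤ d) :
    ∫ x in a..(π / 2), (sin x)⁻¹ ^ d ≤ sin a * (sin a)⁻¹ ^ d := by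
  obtain ⟨e, rfl⟩ := Nat.exists_eq_add_of_le' hd
  have hsin : 0 < sin a := sin_pos_of_pos_of_lt_pi ha₀ (by linarith [pi_pos])
  calc ∫ x in a..(π / 2), (sin x)⁻¹ ^ (e + 2)
      ≤ ∫ x in a..(π / 2), (sin a)⁻¹ ^ e * (sin x)⁻¹ ^ 2 := by
        refine intervalIntegral.integral_mono_on ha (intervalIntegrable_inv_sin_pow ha₀ ha _)
          ((intervalIntegrable_inv_sin_pow ha₀ ha 2).const_mul _) fun x hx => ?_
        have hle : sin a ≤ sin x := sin_le_sin_of_le_of_le_pi_div_two (by linarith) hx.2 hx.1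
        have hsinx : 0 < sin x := hsin.trans_le hle
        rw [pow_add]
        gcongr
    _ = (sin a)⁻¹ ^ e * (cos a / sin a) := by
        rw [intervalIntegral.integral_const_mul, integral_inv_sin_sq ha₀ ha]
    _ ≤ (sin a)⁻¹ ^ e * (1 / sin a) := by
        gcongr
        exact cos_le_one a
    _ = sin a * (sin a)⁻¹ ^ (e + 2) := by
        rw [pow_add]
        field_simp

theorem eval_U_cos {x : ℝ} (hx : sin x ≠ 0) (n : ℕ) :
    (U ℝ n).eval (cos x) = sin ((n + 1 : ℕ) * x) / sin x := by
  rw [eq_div_iff hx, U_real_cos]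
  push_cast
  rfl

theorem abs_eval_U_cos_le_inv_sin {x : ℝ} (hx : 0 < sin x) (n : ℕ) :
    |(U ℝ n).eval (cos x)| ≤ (sin x)⁻¹ := by
  rw [eval_U_cos hx.ne', abs_div, abs_of_pos hx, div_eq_mul_inv]
  exact mul_le_of_le_one_left (by positivity) (abs_sin_le_one _)

theorem abs_eval_U_cos_le_exp {n : ℕ} (hn : n ≠ 0) {x : ℝ} (hx₀ : 0 < x)
    (hx : x ≤ π / (n + 1 : ℕ)) :
    |(U ℝ n).eval (cos x)| ≤
      (n + 1 : ℕ) / sinc (π / (n + 1 : ℕ)) * exp (-(((n + 1 : ℕ) * x) ^ 2 / 8)) := by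
  set N : ℝ := ((n + 1 : ℕ) : ℝ)
  have hN : 1 < N := by simpa [N] using Nat.pos_of_ne_zero hn
  have hNx : N * x ≤ π := by rwa [le_div_iff₀' (by positivity)] at hx
  have hsinc : 0 < sinc (π / N) := sinc_pos (by positivity) (div_lt_self pi_pos hN)
  have hsin : sinc (π / N) * x ≤ sin x :=
    sinc_mul_le_sin (div_le_self pi_pos.le hN.le) hx₀.le hx
  have hsin₀ : 0 < sin x := (by positivity : 0 < sinc (π / N) * x).trans_le hsin
  rw [eval_U_cos hsin₀.ne', abs_of_nonneg
    (div_nonneg (sin_nonneg_of_nonneg_of_le_pi (by positivity) hNx) hsin₀.le)]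
  calc sin (N * x) / sin x
      ≤ N * x * exp (-((N * x) ^ 2 / 8)) / (sinc (π / N) * x) := by
        gcongr
        exact sin_le_mul_exp_neg_sq_div_eight (by positivity) hNx
    _ = N / sinc (π / N) * exp (-((N * x) ^ 2 / 8)) := by
        field_simp

theorem continuous_abs_eval_cos_pow (p : ℝ[X]) (d : ℕ) :
    Continuous fun x => |p.eval (cos x)| ^ d :=
  (p.continuous.comp continuous_cos).abs.pow d

theorem integral_abs_eval_U_cos_pow_head_le {n d : ℕ} (hn : n ≠ 0) (hd : d ≠ 0) :
    ∫ x in 0..(π / (n + 1 : ℕ)), |(U ℝ n).eval (cos x)| ^ d ≤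
      ((n + 1 : ℕ) / sinc (π / (n + 1 : ℕ))) ^ d * (√(8 * π / d) / (2 * (n + 1 : ℕ))) := by
  set N : ℝ := ((n + 1 : ℕ) : ℝ)
  have hN : 1 < N := by simpa [N] using Nat.pos_of_ne_zero hn
  have hsinc : 0 < sinc (π / N) := sinc_pos (by positivity) (div_lt_self pi_pos hN)
  calc ∫ x in 0..(π / N), |(U ℝ n).eval (cos x)| ^ d
      ≤ ∫ x in 0..(π / N), (N / sinc (π / N)) ^ d * exp (-(d * N ^ 2 / 8) * x ^ 2) := by
        refine intervalIntegral.integral_mono_on_of_le_Ioo (by positivity)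
          ((continuous_abs_eval_cos_pow _ _).intervalIntegrable _ _)
          (Continuous.intervalIntegrable (by fun_prop) _ _) fun x hx => ?_
        calc |(U ℝ n).eval (cos x)| ^ d
            ≤ (N / sinc (π / N) * exp (-((N * x) ^ 2 / 8))) ^ d := by
              gcongr
              exact abs_eval_U_cos_le_exp hn hx.1 hx.2.le
          _ = (N / sinc (π / N)) ^ d * exp (-(d * N ^ 2 / 8) * x ^ 2) := by
              rw [mul_pow, ← exp_nat_mul]
              ring_nf
    _ ≤ (N / sinc (π / N)) ^ d * (√(π / (d * N ^ 2 / 8)) / 2) := by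
        rw [intervalIntegral.integral_const_mul]
        gcongr
        exact integral_exp_neg_mul_sq_le (by positivity) (by positivity)
    _ = (N / sinc (π / N)) ^ d * (√(8 * π / d) / (2 * N)) := by
        have : π / (d * N ^ 2 / 8) = 8 * π / d / N ^ 2 := by field_simp
        rw [this, sqrt_div (by positivity), sqrt_sq (by positivity)]
        field_simp

theorem integral_abs_eval_U_cos_pow_tail_le {n d : ℕ} (hn : n ≠ 0) (hd : 2 ≤ d) :
    ∫ x in (π / (n + 1 : ℕ))..(π / 2), |(U ℝ n).eval (cos x)| ^ d ≤
      ((n + 1 : ℕ) / sinc (π / (n + 1 : ℕ))) ^ d * (π / ((n + 1 : ℕ) * π ^ d)) := by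
  set N : ℝ := ((n + 1 : ℕ) : ℝ)
  have hN : 2 ≤ N := Nat.ofNat_le_cast.2 (by lia)
  have ha₀ : 0 < π / N := by positivity
  have ha : π / N ≤ π / 2 := by gcongr
  have hsin₀ : 0 < sin (π / N) := sin_pos_of_pos_of_lt_pi ha₀ (by linarith [pi_pos])
  calc ∫ x in (π / N)..(π / 2), |(U ℝ n).eval (cos x)| ^ d
      ≤ ∫ x in (π / N)..(π / 2), (sin x)⁻¹ ^ d := by
        refine intervalIntegral.integral_mono_on ha
          ((continuous_abs_eval_cos_pow _ _).intervalIntegrable _ _)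
          (intervalIntegrable_inv_sin_pow ha₀ ha d) fun x hx => ?_
        gcongr
        exact abs_eval_U_cos_le_inv_sin
          (sin_pos_of_pos_of_lt_pi (ha₀.trans_le hx.1) (by linarith [hx.2, pi_pos])) n
    _ ≤ sin (π / N) * (sin (π / N))⁻¹ ^ d := integral_inv_sin_pow_le ha₀ ha hd
    _ ≤ π / N * (sin (π / N))⁻¹ ^ d := by
        gcongr
        exact sin_le ha₀.le
    _ = (N / sinc (π / N)) ^ d * (π / (N * π ^ d)) := by
        have hdiv : N / sinc (π / N) = π * (sin (π / N))⁻¹ := by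
          rw [sinc_of_ne_zero ha₀.ne']
          field_simp
        rw [hdiv, mul_pow]
        field_simp

theorem integral_abs_eval_U_cos_pow_le {n d : ℕ} (hn : n ≠ 0) (hd : 2 ≤ d) :
    (n + 1 : ℕ) * (2 / π * ∫ x in 0..(π / 2), |(U ℝ n).eval (cos x)| ^ d) ≤
      ((n + 1 : ℕ) / sinc (π / (n + 1 : ℕ))) ^ d * (√(8 / π) / √d + 2 / π ^ d) := by
  have hint (a b : ℝ) : IntervalIntegrable (fun x => |(U ℝ n).eval (cos x)| ^ d) volume a b :=
    (continuous_abs_eval_cos_pow _ _).intervalIntegrable a b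
  have hsqrt : √(8 * π / d) = π * (√(8 / π) / √d) := by
    rw [← sqrt_div' _ (by positivity), ← sqrt_sq pi_pos.le, ← sqrt_mul (by positivity),
      sqrt_sq pi_pos.le]
    congr 1
    field_simp
  rw [← intervalIntegral.integral_add_adjacent_intervals (hint 0 (π / (n + 1 : ℕ))) (hint _ _)]
  grw [integral_abs_eval_U_cos_pow_head_le hn (by lia), integral_abs_eval_U_cos_pow_tail_le hn hd]
  rw [hsqrt]
  refine le_of_eq ?_
  field_simp

end IntegralBounds

section Asymptotics

open Filter Topology Real

theorem five_mul_sqrt_lt_pi_pow {d : ℕ} (hd : 2 ≤ d) : 5 * √d < π ^ d := by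
  have hpow : (25 : ℝ) * d < 9 ^ d := by
    induction d, hd using Nat.le_induction with
    | base => norm_num
    | succ k hk ih =>
      have : (2 : ℝ) ≤ k := by exact_mod_cast hk
      rw [pow_succ]
      push_cast
      linarith
  refine lt_of_pow_lt_pow_left₀ 2 (by positivity) ?_
  calc (5 * √d) ^ 2 = 25 * d := by rw [mul_pow, sq_sqrt (by positivity)]; norm_num
    _ < (3 ^ d) ^ 2 := by rw [← pow_mul, mul_comm d, pow_mul]; norm_num [hpow]
    _ ≤ (π ^ d) ^ 2 := by gcongr; exact pi_gt_three.le

theorem sqrt_eight_div_pi_lt : √(8 / π) < 8 / 5 := by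
  rw [sqrt_lt' (by norm_num), div_lt_iff₀ pi_pos]
  linarith [pi_gt_d2]

theorem sqrt_eight_div_pi_div_sqrt_add_lt {d : ℕ} (hd : 2 ≤ d) :
    √(8 / π) / √d + 2 / π ^ d < 2 / √d := by
  have : 0 < √(d : ℝ) := by positivity
  calc √(8 / π) / √d + 2 / π ^ d < 8 / 5 / √d + 2 / (5 * √d) := by
        gcongr
        · exact sqrt_eight_div_pi_lt
        · exact five_mul_sqrt_lt_pi_pow hd
    _ = 2 / √d := by
        field_simp
        norm_num

theorem eventually_div_sinc_pow_mul_lt_mul_descFactorial {c C : ℝ} (h : c < C) (d : ℕ) :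
    ∀ᶠ n : ℕ in atTop, (n / sinc (π / n)) ^ d * c < C * n.descFactorial d := by
  have hsinc : Tendsto (fun n : ℕ => (sinc (π / n))⁻¹ ^ d * c) atTop (𝓝 c) := by
    have := (continuous_sinc.tendsto 0).comp (tendsto_const_div_atTop_nhds_zero_nat π)
    rw [sinc_zero] at this
    simpa using ((this.inv₀ one_ne_zero).pow d).mul_const c
  have hdesc : Tendsto (fun n : ℕ => C * ((n.descFactorial d : ℝ) / n ^ d)) atTop (𝓝 C) := by
    have hpow : ∀ᶠ n : ℕ in atTop, (n ^ d : ℝ) ≠ 0 := by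
      filter_upwards [eventually_ne_atTop 0] with n hn
      positivity
    have := (Asymptotics.isEquivalent_iff_tendsto_one hpow).1 (isEquivalent_descFactorial d)
    simpa using this.const_mul C
  filter_upwards [hsinc.eventually_lt hdesc h, eventually_gt_atTop 0] with n hlt hn
  calc (n / sinc (π / n)) ^ d * c = n ^ d * ((sinc (π / n))⁻¹ ^ d * c) := by
        rw [div_eq_mul_inv, mul_pow, mul_assoc]
    _ < n ^ d * (C * (n.descFactorial d / n ^ d)) := by gcongr
    _ = C * n.descFactorial d := by field_simp

end Asymptotics

section AntichainBound

open Finset Polynomial Real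

theorem mul_card_antichain_mul_factorial_le {d n : ℕ} (hd : 2 ≤ d) (hn : 2 ≤ n) {X : Finset ℕ}
    (hX : #X = n) {U : Finset (Finset ℕ)} (hUX : U ⊆ X.powersetCard d)
    (hU : IsAntichain (SubsetLE d) (U : Set (Finset ℕ))) :
    n * ((#U * d.factorial : ℕ) : ℝ) ≤
      (n / sinc (π / n)) ^ d * (√(8 / π) / √d + 2 / π ^ d) := by
  obtain ⟨m, rfl⟩ := Nat.exists_eq_add_of_le' (one_le_two.trans hn)
  calc ((m + 1 : ℕ) : ℝ) * (#U * d.factorial : ℕ)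
      ≤ (m + 1 : ℕ) * irreducibleCount (Chebyshev.U ℝ m ^ d) := by
        gcongr
        exact card_antichain_mul_factorial_le_map_U_pow irreducibleCount
          (fun k => (irreducibleCount_U k).ge) hX hUX hU
    _ ≤ (m + 1 : ℕ) * (2 / π * ∫ x in 0..(π / 2), |(Chebyshev.U ℝ m).eval (cos x)| ^ d) := by
        gcongr
        simpa only [eval_pow, abs_pow] using
          irreducibleCount_le_integral_abs (abs_eval_neg_U_pow m d)
    _ ≤ _ := integral_abs_eval_U_cos_pow_le (by lia) hd

end AntichainBound

/-- **Lemma 2.** Fix `d > 1`. For all sufficiently large `n`: for any set `X` of `n`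
positive integers, every antichain `U` in the partial order on `d`-element subsets of `X`
satisfies `|U| < (2/√d) · (1/n) · C(n, d)`. -/
theorem subset_antichain_small (d : ℕ) (hd : 1 < d) :
    ∃ N : ℕ, ∀ n : ℕ, N ≤ n →
      ∀ X : Finset ℕ, (∀ x ∈ X, 0 < x) → X.card = n →
        ∀ U : Finset (Finset ℕ), U ⊆ X.powersetCard d →
          IsAntichain (SubsetLE d) (U : Set (Finset ℕ)) →
          (U.card : ℝ) < 2 / Real.sqrt d * (1 / n) * (n.choose d) := by
  obtain ⟨N, hN⟩ := Filter.eventually_atTop.1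
    (eventually_div_sinc_pow_mul_lt_mul_descFactorial (sqrt_eight_div_pi_div_sqrt_add_lt hd) d)
  refine ⟨max N 2, fun n hn X _ hX U hUX hU => ?_⟩
  obtain ⟨hNn, hn₂⟩ := max_le_iff.1 hn
  have : (0 : ℝ) < n := Nat.cast_pos.2 (by lia)
  have hlt : n * ((U.card * d.factorial : ℕ) : ℝ) <
      2 / Real.sqrt d * (d.factorial * n.choose d : ℕ) :=
    Nat.descFactorial_eq_factorial_mul_choose n d ▸
      (mul_card_antichain_mul_factorial_le hd hn₂ hX hUX hU).trans_lt (hN n hNn)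
  refine lt_of_mul_lt_mul_of_nonneg_left (a := n * (d.factorial : ℝ)) ?_ (by positivity)
  calc n * (d.factorial : ℝ) * U.card = n * (U.card * d.factorial : ℕ) := by push_cast; ring
    _ < 2 / Real.sqrt d * (d.factorial * n.choose d : ℕ) := hlt
    _ = n * (d.factorial : ℝ) * (2 / Real.sqrt d * (1 / n) * n.choose d) := by
      push_cast
      field_simp
end

section
/- Fix positive integers k, m, a, b. Then there exists a constant C > 0 such that for every positive integer n with gcd(m,n) = 1, the number of pairs of positive integers (x,y) with gcd(a,x) = 1, gcd(b,y) = 1, and m/n = a/x + b/y is at most C·n^{1/k}. -/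
/-! Clearing denominators turns `m / n = a / x + b / y` into
`(m x - n a) (m y - n b) = a b n ^ 2` with both factors positive, so a solution `(x, y)` is
determined by a factorization of `a b n ^ 2`. The number of divisors of `N` is at most a
constant times `N ^ ε` for every `ε > 0`: in the product `∏ (v_p + 1) / p ^ (ε v_p)` each
factor is bounded uniformly in `v_p`, and those with `2 ≤ p ^ ε` are at most `1`. -/

open Finset

theorem natCast_add_one_le_div_sub_one_mul_pow {K : Type*} [Field K] [LinearOrder K]
    [IsStrictOrderedRing K] {x : K} (hx : 1 < x) (e : ℕ) : (e + 1 : K) ≤ x / (x - 1) * x ^ e := by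
  rw [div_mul_eq_mul_div, le_div_iff₀ (sub_pos.2 hx), ← pow_succ']
  have bernoulli := one_add_mul_sub_le_pow (by linarith : -1 ≤ x) (e + 1)
  push_cast at bernoulli
  linarith

theorem natCast_add_one_le_pow_of_two_le {R : Type*} [Semiring R] [PartialOrder R]
    [IsStrictOrderedRing R] {x : R} (hx : 2 ≤ x) (e : ℕ) : (e + 1 : R) ≤ x ^ e :=
  calc (e + 1 : R) ≤ 2 ^ e := mod_cast Nat.lt_two_pow_self
    _ ≤ x ^ e := pow_le_pow_left₀ zero_le_two hx e

theorem map_eq_prod_primeFactors_pow {M : Type*} [CommMonoid M] (g : ℕ →* M) {n : ℕ}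
    (hn : n ≠ 0) : g n = ∏ p ∈ n.primeFactors, g p ^ n.factorization p := by
  conv_lhs => rw [← Nat.prod_factorization_pow_eq_self hn]
  simp only [Nat.prod_factorization_eq_prod_primeFactors, map_prod, map_pow]

theorem card_divisors_le_prod_mul {K : Type*} [Field K] [LinearOrder K] [IsStrictOrderedRing K]
    (g : ℕ →* K) {S : Finset ℕ} (one_lt : ∀ p ∈ S, 1 < g p)
    (two_le : ∀ p, p.Prime → p ∉ S → 2 ≤ g p) {n : ℕ} (hn : n ≠ 0) :
    (#n.divisors : K) ≤ (∏ p ∈ S, g p / (g p - 1)) * g n := by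
  have one_le_factor (p) (hp : p ∈ S) : 1 ≤ g p / (g p - 1) := by
    rw [one_le_div (sub_pos.2 (one_lt p hp))]
    linarith
  have local_bound (p) (hp : p ∈ n.primeFactors) : (n.factorization p + 1 : K) ≤
      (if p ∈ S then g p / (g p - 1) else 1) * g p ^ n.factorization p := by
    split_ifs with hpS
    · exact natCast_add_one_le_div_sub_one_mul_pow (one_lt p hpS) _
    · rw [one_mul]
      exact natCast_add_one_le_pow_of_two_le (two_le p (Nat.prime_of_mem_primeFactors hp) hpS) _
  have g_nonneg : 0 ≤ g n := by
    rw [map_eq_prod_primeFactors_pow g hn]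
    refine prod_nonneg fun p hp ↦ pow_nonneg ?_ _
    by_cases hpS : p ∈ S
    · exact zero_le_one.trans (one_lt p hpS).le
    · exact zero_le_two.trans (two_le p (Nat.prime_of_mem_primeFactors hp) hpS)
  calc (#n.divisors : K)
      = ∏ p ∈ n.primeFactors, (n.factorization p + 1 : K) := by
        simp [Nat.card_divisors hn]
    _ ≤ ∏ p ∈ n.primeFactors,
          (if p ∈ S then g p / (g p - 1) else 1) * g p ^ n.factorization p :=
        prod_le_prod (fun p _ ↦ by positivity) local_bound
    _ = (∏ p ∈ n.primeFactors ∩ S, g p / (g p - 1)) * g n := by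
        rw [prod_mul_distrib, prod_ite_mem, ← map_eq_prod_primeFactors_pow g hn]
    _ ≤ (∏ p ∈ S, g p / (g p - 1)) * g n := by
        refine mul_le_mul_of_nonneg_right (prod_le_prod_of_subset_of_one_le inter_subset_right
          (fun p hp ↦ zero_le_one.trans (one_le_factor p (mem_inter.1 hp).2))
          fun p hp _ ↦ one_le_factor p hp) g_nonneg

theorem exists_card_divisors_le_mul_rpow {ε : ℝ} (hε : 0 < ε) :
    ∃ C : ℝ, 0 < C ∧ ∀ n : ℕ, n ≠ 0 → (#n.divisors : ℝ) ≤ C * (n : ℝ) ^ ε := by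
  let g : ℕ →* ℝ :=
    { toFun n := (n : ℝ) ^ ε
      map_one' := by simp
      map_mul' x y := by simp [Real.mul_rpow] }
  obtain ⟨N, two_le⟩ : ∃ N : ℕ, ∀ p ≥ N, 2 ≤ g p := Filter.eventually_atTop.1 <|
    ((tendsto_rpow_atTop hε).comp tendsto_natCast_atTop_atTop).eventually_ge_atTop 2
  have one_lt (p) (hp : p ∈ Ico 2 N) : 1 < g p :=
    Real.one_lt_rpow (mod_cast (mem_Ico.1 hp).1) hε
  refine ⟨∏ p ∈ Ico 2 N, g p / (g p - 1), prod_pos fun p hp ↦ ?_, fun n hn ↦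
    card_divisors_le_prod_mul g one_lt (fun p hp hpN ↦ two_le p ?_) hn⟩
  · exact div_pos (zero_lt_one.trans (one_lt p hp)) (sub_pos.2 (one_lt p hp))
  · by_contra! hlt
    exact hpN (mem_Ico.2 ⟨hp.two_le, hlt⟩)

theorem sub_mul_sub_eq_of_div_eq_div_add_div {K : Type*} [Field K] {m n a b x y : K}
    (hn : n ≠ 0) (hx : x ≠ 0) (hy : y ≠ 0) (h : m / n = a / x + b / y) :
    (m * x - n * a) * (m * y - n * b) = a * b * n ^ 2 := by
  field_simp at h
  linear_combination m * h

theorem mul_lt_mul_of_div_eq_div_add_div {K : Type*} [Field K] [LinearOrder K]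
    [IsStrictOrderedRing K] {m n a b x y : K} (hn : 0 < n) (hb : 0 < b) (hx : 0 < x) (hy : 0 < y)
    (h : m / n = a / x + b / y) : n * a < m * x := by
  have : a / x < m / n := h ▸ lt_add_of_pos_right _ (div_pos hb hy)
  rwa [div_lt_div_iff₀ hx hn, mul_comm a] at this

/-- The pairs of denominators `(x, y)` in the representations `m / n = a / x + b / y`. Both are
required to be positive, which excludes the solutions arising from `a / 0 = 0`. -/
def denominatorPairs (m n a b : ℕ) : Set (ℕ × ℕ) :=
  {p | 0 < p.1 ∧ 0 < p.2 ∧ (m : ℚ) / n = (a : ℚ) / p.1 + (b : ℚ) / p.2}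

section denominatorPairs

variable {m n a b : ℕ}

theorem mul_lt_mul_of_mem_denominatorPairs (hn : 0 < n) (ha : 0 < a) (hb : 0 < b) {p : ℕ × ℕ}
    (hp : p ∈ denominatorPairs m n a b) : n * a < m * p.1 ∧ n * b < m * p.2 := by
  obtain ⟨hx, hy, h⟩ := hp
  have hlt₁ := mul_lt_mul_of_div_eq_div_add_div (by positivity) (by positivity) (by positivity)
    (by positivity) h
  have hlt₂ := mul_lt_mul_of_div_eq_div_add_div (by positivity) (by positivity) (by positivity)
    (by positivity) (h.trans (add_comm _ _))
  exact ⟨mod_cast hlt₁, mod_cast hlt₂⟩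

theorem mapsTo_denominatorPairs_divisorsAntidiagonal (hn : 0 < n) (ha : 0 < a) (hb : 0 < b) :
    Set.MapsTo (fun p ↦ (m * p.1 - n * a, m * p.2 - n * b)) (denominatorPairs m n a b)
      (a * b * n ^ 2).divisorsAntidiagonal := by
  intro p hp
  obtain ⟨hlt₁, hlt₂⟩ := mul_lt_mul_of_mem_denominatorPairs hn ha hb hp
  obtain ⟨hx, hy, h⟩ := hp
  rw [mem_coe, Nat.mem_divisorsAntidiagonal]
  refine ⟨?_, by positivity⟩
  have factored := sub_mul_sub_eq_of_div_eq_div_add_div (by positivity) (by positivity)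
    (by positivity) h
  rw [← Nat.cast_inj (R := ℚ)]
  push_cast [hlt₁.le, hlt₂.le]
  exact factored

theorem injOn_denominatorPairs (hm : 0 < m) (hn : 0 < n) (ha : 0 < a) (hb : 0 < b) :
    Set.InjOn (fun p ↦ (m * p.1 - n * a, m * p.2 - n * b)) (denominatorPairs m n a b) := by
  intro p hp q hq hpq
  obtain ⟨hp₁, hp₂⟩ := mul_lt_mul_of_mem_denominatorPairs hn ha hb hp
  obtain ⟨hq₁, hq₂⟩ := mul_lt_mul_of_mem_denominatorPairs hn ha hb hq
  obtain ⟨h₁, h₂⟩ := Prod.mk.inj hpq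
  exact Prod.ext (Nat.eq_of_mul_eq_mul_left hm (by omega))
    (Nat.eq_of_mul_eq_mul_left hm (by omega))

theorem finite_denominatorPairs (hm : 0 < m) (hn : 0 < n) (ha : 0 < a) (hb : 0 < b) :
    (denominatorPairs m n a b).Finite :=
  .of_injOn (mapsTo_denominatorPairs_divisorsAntidiagonal hn ha hb)
    (injOn_denominatorPairs hm hn ha hb) (finite_toSet _)

theorem ncard_denominatorPairs_le_card_divisors (hm : 0 < m) (hn : 0 < n) (ha : 0 < a)
    (hb : 0 < b) : (denominatorPairs m n a b).ncard ≤ #(a * b * n ^ 2).divisors := by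
  rw [← card_map, Nat.map_div_right_divisors, ← Set.ncard_coe_finset]
  exact Set.ncard_le_ncard_of_injOn _ (mapsTo_denominatorPairs_divisorsAntidiagonal hn ha hb)
    (injOn_denominatorPairs hm hn ha hb) (finite_toSet _)

end denominatorPairs

theorem unit_fraction_pairs_bound_general {ε : ℝ} (hε : 0 < ε) {a b : ℕ} (ha : 0 < a)
    (hb : 0 < b) :
    ∃ C : ℝ, 0 < C ∧ ∀ m n : ℕ, 0 < m → 0 < n →
      (denominatorPairs m n a b).Finite ∧
        ((denominatorPairs m n a b).ncard : ℝ) ≤ C * (n : ℝ) ^ ε := by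
  obtain ⟨C, hC, card_divisors_le⟩ := exists_card_divisors_le_mul_rpow (half_pos hε)
  refine ⟨C * (a * b : ℝ) ^ (ε / 2), by positivity, fun m n hm hn ↦
    ⟨finite_denominatorPairs hm hn ha hb, ?_⟩⟩
  calc ((denominatorPairs m n a b).ncard : ℝ)
      ≤ #(a * b * n ^ 2).divisors := mod_cast ncard_denominatorPairs_le_card_divisors hm hn ha hb
    _ ≤ C * ((a * b * n ^ 2 : ℕ) : ℝ) ^ (ε / 2) := card_divisors_le _ (by positivity)
    _ = C * (a * b : ℝ) ^ (ε / 2) * (n : ℝ) ^ ε := by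
        push_cast
        rw [Real.mul_rpow (by positivity) (by positivity), ← Real.rpow_natCast_mul (by positivity),
          Nat.cast_two, mul_div_cancel₀ ε two_ne_zero, mul_assoc]

/-- **Lemma 4.** Fix positive integers `k, m, a, b`. Then there is `C > 0` such that for
every positive integer `n` with `gcd(m, n) = 1`, the set of pairs of positive integers
`(x, y)` with `gcd(a, x) = 1`, `gcd(b, y) = 1` and `m/n = a/x + b/y` is finite of size at
most `C · n^(1/k)`. -/
theorem unit_fraction_pairs_bound (k m a b : ℕ)
    (hk : 0 < k) (hm : 0 < m) (ha : 0 < a) (hb : 0 < b) :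
    ∃ C : ℝ, 0 < C ∧ ∀ n : ℕ, 0 < n → Nat.gcd m n = 1 →
      {p : ℕ × ℕ | 0 < p.1 ∧ 0 < p.2 ∧ Nat.gcd a p.1 = 1 ∧ Nat.gcd b p.2 = 1 ∧
          (m : ℚ) / n = (a : ℚ) / p.1 + (b : ℚ) / p.2}.Finite ∧
      (({p : ℕ × ℕ | 0 < p.1 ∧ 0 < p.2 ∧ Nat.gcd a p.1 = 1 ∧ Nat.gcd b p.2 = 1 ∧
          (m : ℚ) / n = (a : ℚ) / p.1 + (b : ℚ) / p.2}.ncard : ℝ)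
        ≤ C * (n : ℝ) ^ ((1 : ℝ) / k)) := by
  obtain ⟨C, hC, bound⟩ := unit_fraction_pairs_bound_general (ε := 1 / k) (by positivity) ha hb
  refine ⟨C, hC, fun n hn _ ↦ ?_⟩
  obtain ⟨hfin, hcard⟩ := bound m n hm hn
  refine ⟨hfin.subset ?sub, (Nat.cast_le.2 (Set.ncard_le_ncard ?sub hfin)).trans hcard⟩
  exact fun p ⟨hx, hy, _, _, h⟩ ↦ ⟨hx, hy, h⟩
end
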